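/- arXiv:2503.12766 — 3 statements merged into one kernel-verified Lean document; each statement's English description precedes it below -/
import Mathlib

section
/- Let X be a well-filtered coherent T0 space. If the product space X × X is a Fréchet space, then X is sober. -/
/-- A subset of a topological space is saturated if it is the intersection of the open sets
containing it. -/
def IsSaturatedSet {X : Type*} [TopologicalSpace X] (A : Set X) : Prop :=
  A = ⋂₀ {U : Set X | IsOpen U ∧ A ⊆ U}

/-- A space is well-filtered if for every filtered family 𝓕 of compact saturated sets and every
open U with ⋂𝓕 ⊆ U, some member of 𝓕 is contained in U. -/
def WellFiltered (X : Type*) [TopologicalSpace X] : Prop :=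
  ∀ 𝓕 : Set (Set X), 𝓕.Nonempty → (∀ K ∈ 𝓕, IsCompact K ∧ IsSaturatedSet K) →
    DirectedOn (fun A B => B ⊆ A) 𝓕 →
    ∀ U : Set X, IsOpen U → ⋂₀ 𝓕 ⊆ U → ∃ K ∈ 𝓕, K ⊆ U

/-- A space is coherent if the intersection of any two compact saturated sets is compact. -/
def Coherent (X : Type*) [TopologicalSpace X] : Prop :=
  ∀ K Q : Set X, IsCompact K → IsSaturatedSet K → IsCompact Q → IsSaturatedSet Q →
    IsCompact (K ∩ Q)

section

open Filter Topology

variable {X : Type*} [TopologicalSpace X]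

theorem isSaturatedSet_nhdsKer (s : Set X) : IsSaturatedSet (nhdsKer s) := by
  have h := nhdsKer_def (nhdsKer s)
  rwa [nhdsKer_nhdsKer] at h

theorem IsSaturatedSet.inter {s t : Set X} (hs : IsSaturatedSet s) (ht : IsSaturatedSet t) :
    IsSaturatedSet (s ∩ t) := by
  refine Set.Subset.antisymm (fun x hx U hU => hU.2 hx) fun x hx => ⟨?_, ?_⟩
  · rw [hs]
    exact fun U hU => hx U ⟨hU.1, Set.inter_subset_left.trans hU.2⟩
  · rw [ht]
    exact fun U hU => hx U ⟨hU.1, Set.inter_subset_right.trans hU.2⟩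

/-- In a well-filtered space, a closed set which meets every member of a filtered family of
compact saturated sets meets the intersection of the family. -/
theorem WellFiltered.exists_mem_forall_mem (hwf : WellFiltered X) {ι : Type*} [Nonempty ι]
    {K : ι → Set X} (hK : ∀ i, IsCompact (K i)) (hsat : ∀ i, IsSaturatedSet (K i))
    (hdir : Directed (fun A B => B ⊆ A) K) {A : Set X} (hA : IsClosed A)
    (hne : ∀ i, (K i ∩ A).Nonempty) : ∃ z ∈ A, ∀ i, z ∈ K i := by
  by_contra! h
  obtain ⟨_, ⟨i, rfl⟩, hi⟩ := hwf (Set.range K) (Set.range_nonempty K)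
    (by rintro _ ⟨i, rfl⟩; exact ⟨hK i, hsat i⟩) hdir.directedOn_range Aᶜ hA.isOpen_compl
    (by
      intro z hz hzA
      obtain ⟨i, hi⟩ := h z hzA
      exact hi (hz _ ⟨i, rfl⟩))
  obtain ⟨z, hzK, hzA⟩ := hne i
  exact hi hzK hzA

/-- The saturation of the union of the tail of a sequence and a point. -/
def tailSaturation (a : ℕ → X) (x : X) (n : ℕ) : Set X :=
  nhdsKer (insert x (Set.range fun m => a (m + n)))

theorem isCompact_tailSaturation {a : ℕ → X} {x : X} (h : Tendsto a atTop (𝓝 x)) (n : ℕ) :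
    IsCompact (tailSaturation a x n) :=
  ((tendsto_add_atTop_iff_nat n).2 h).isCompact_insert_range.nhdsKer

theorem tailSaturation_anti (a : ℕ → X) (x : X) : Antitone (tailSaturation a x) := by
  intro m n hmn
  refine nhdsKer_mono (Set.insert_subset_insert ?_)
  rintro _ ⟨k, rfl⟩
  exact ⟨k + (n - m), congrArg a (by omega)⟩

theorem mem_tailSaturation (a : ℕ → X) (x : X) (n : ℕ) : a n ∈ tailSaturation a x n :=
  subset_nhdsKer (Or.inr ⟨0, congrArg a (by omega)⟩)

theorem specializes_of_forall_mem_tailSaturation {a : ℕ → X} {x z : X}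
    (h : Tendsto a atTop (𝓝 x)) (hz : ∀ n, z ∈ tailSaturation a x n) : z ⤳ x := by
  by_contra hzx
  have hfreq : ∃ᶠ n in atTop, a n ∈ closure {z} := by
    refine frequently_atTop.2 fun n => ?_
    obtain ⟨y, hy, hzy⟩ := mem_nhdsKer_iff_specializes.1 (hz n)
    rcases hy with rfl | ⟨m, rfl⟩
    · exact absurd hzy hzx
    · exact ⟨m + n, by omega, hzy.mem_closure⟩
  exact hzx (specializes_iff_mem_closure.2
    (isClosed_closure.mem_of_frequently_of_tendsto hfreq h))

/-- If `X × X` is a Fréchet space, any two points of an irreducible subset of `X` are limits of a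
common sequence in that subset. -/
theorem IsIrreducible.exists_seq_tendsto_tendsto [FrechetUrysohnSpace (X × X)] {A : Set X}
    (hA : IsIrreducible A) {x y : X} (hx : x ∈ A) (hy : y ∈ A) :
    ∃ a : ℕ → X, (∀ n, a n ∈ A) ∧ Tendsto a atTop (𝓝 x) ∧ Tendsto a atTop (𝓝 y) := by
  have hcl : (x, y) ∈ closure ((fun a : X => (a, a)) '' A) := by
    refine mem_closure_iff.2 fun W hW hxy => ?_
    obtain ⟨U, V, hU, hV, hxU, hyV, hUV⟩ := isOpen_prod_iff.1 hW x y hxy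
    obtain ⟨a, haA, haU, haV⟩ := hA.2 U V hU hV ⟨x, hx, hxU⟩ ⟨y, hy, hyV⟩
    exact ⟨(a, a), hUV ⟨haU, haV⟩, a, haA, rfl⟩
  obtain ⟨p, hp, hlim⟩ := mem_closure_iff_seq_limit.1 hcl
  choose a haA hap using hp
  obtain rfl : (fun n => (a n, a n)) = p := funext hap
  exact ⟨a, haA, (continuous_fst.tendsto _).comp hlim, (continuous_snd.tendsto _).comp hlim⟩

/-- In a well-filtered coherent space with Fréchet square, irreducible closed sets are directed
for the specialization order. -/
theorem WellFiltered.exists_specializes_specializes (hwf : WellFiltered X) (hcoh : Coherent X)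
    [FrechetUrysohnSpace (X × X)] {A : Set X} (hA : IsIrreducible A) (hAc : IsClosed A)
    {x y : X} (hx : x ∈ A) (hy : y ∈ A) : ∃ z ∈ A, z ⤳ x ∧ z ⤳ y := by
  obtain ⟨a, haA, hax, hay⟩ := hA.exists_seq_tendsto_tendsto hx hy
  obtain ⟨z, hzA, hz⟩ := hwf.exists_mem_forall_mem
    (K := fun n => tailSaturation a x n ∩ tailSaturation a y n)
    (fun n => hcoh _ _ (isCompact_tailSaturation hax n) (isSaturatedSet_nhdsKer _)
      (isCompact_tailSaturation hay n) (isSaturatedSet_nhdsKer _))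
    (fun n => (isSaturatedSet_nhdsKer _).inter (isSaturatedSet_nhdsKer _))
    (directed_of_isDirected_le fun m n hmn =>
      Set.inter_subset_inter (tailSaturation_anti a x hmn) (tailSaturation_anti a y hmn))
    hAc (fun n => ⟨a n, ⟨mem_tailSaturation a x n, mem_tailSaturation a y n⟩, haA n⟩)
  exact ⟨z, hzA, specializes_of_forall_mem_tailSaturation hax fun n => (hz n).1,
    specializes_of_forall_mem_tailSaturation hay fun n => (hz n).2⟩

end

/-- Let X be a well-filtered coherent T0 space. If the product space X × X is a
Fréchet space, then X is sober. -/
theorem stmt5 {X : Type*} [TopologicalSpace X] [T0Space X]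
    (hwf : WellFiltered X) (hcoh : Coherent X)
    [FrechetUrysohnSpace (X × X)] :
    QuasiSober X := by
  refine ⟨fun {A} hA hAc => ?_⟩
  have : Nonempty A := hA.1.to_subtype
  obtain ⟨z, hzA, hz⟩ := hwf.exists_mem_forall_mem (K := fun x : A => nhdsKer {x.1})
    (fun _ => isCompact_singleton.nhdsKer) (fun _ => isSaturatedSet_nhdsKer _)
    (fun x y => by
      obtain ⟨z, hzA, hzx, hzy⟩ :=
        hwf.exists_specializes_specializes hcoh hA hAc x.2 y.2
      refine ⟨⟨z, hzA⟩, fun w hw => ?_, fun w hw => ?_⟩ <;>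
        rw [mem_nhdsKer_singleton] at hw ⊢
      exacts [hw.trans hzx, hw.trans hzy])
    hAc (fun x => ⟨x, subset_nhdsKer rfl, x.2⟩)
  exact ⟨z, Set.Subset.antisymm (closure_minimal (Set.singleton_subset_iff.2 hzA) hAc)
    fun x hx => (mem_nhdsKer_singleton.1 (hz ⟨x, hx⟩)).mem_closure⟩
end

section
/- Let X be an ω type P-space. Then the lattice 𝒪(X) of open subsets of X, equipped with the Scott topology, is sober. -/
/-- A topological space is an ω type space if its topology is generated by a subbase
consisting of countable sets. -/
def OmegaTypeSpace (X : Type*) [t : TopologicalSpace X] : Prop :=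
  ∃ S : Set (Set X), (∀ s ∈ S, s.Countable) ∧ t = TopologicalSpace.generateFrom S

/-- A topological space is a P-space if every countable intersection of open sets is open. -/
def PSpace (X : Type*) [TopologicalSpace X] : Prop :=
  ∀ S : Set (Set X), S.Countable → (∀ U ∈ S, IsOpen U) → IsOpen (⋂₀ S)

/-- A poset is Scott sober if, equipped with its Scott topology, it is a sober space
(T0 and every irreducible closed set is the closure of a point). -/
def ScottSober (L : Type*) [Preorder L] : Prop :=
  @T0Space L (Topology.scott L Set.univ) ∧ @QuasiSober L (Topology.scott L Set.univ)

open Set TopologicalSpace in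
/-- An ω type P-space is Alexandrov-discrete. -/
theorem alexandrovDiscrete_of_omegaTypeSpace_of_pSpace {X : Type*} [TopologicalSpace X]
    (h1 : OmegaTypeSpace X) (h2 : PSpace X) : AlexandrovDiscrete X := by
  obtain ⟨B, hBc, hB⟩ := h1
  refine ⟨fun S hS => isOpen_iff_forall_mem_open.2 fun x hx => ?_⟩
  by_cases h : ∃ s ∈ B, x ∈ s
  · obtain ⟨s, hsB, hxs⟩ := h
    have hs : IsOpen s := hB ▸ isOpen_generateFrom_of_mem hsB
    have hsep : ∀ y : ↥(s \ ⋂₀ S), ∃ U ∈ S, (y : X) ∉ U := fun y => by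
      simpa using y.2.2
    choose U hUS hyU using hsep
    have : Countable ↥(s \ ⋂₀ S) := ((hBc s hsB).mono sdiff_subset).to_subtype
    refine ⟨s ∩ ⋂₀ range U, ?_, hs.inter (h2 _ (countable_range U) ?_), hxs, ?_⟩
    · rintro y ⟨hys, hyU'⟩
      by_contra hy
      exact hyU ⟨y, hys, hy⟩ (hyU' _ (mem_range_self _))
    · rintro _ ⟨y, rfl⟩
      exact hS _ (hUS y)
    · rintro _ ⟨y, rfl⟩
      exact hx _ (hUS y)
  · -- `x` lies in no subbasic set, so its only open neighbourhood is the whole space.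
    push Not at h
    have huniv : ∀ U : Set X, GenerateOpen B U → x ∈ U → U = univ := by
      intro U hU
      induction hU with
      | basic s hs => exact fun hxs => absurd hxs (h s hs)
      | univ => exact fun _ => rfl
      | inter s t _ _ ihs iht => exact fun hx => by rw [ihs hx.1, iht hx.2, univ_inter]
      | sUnion T _ ih =>
        rintro ⟨t, htT, hxt⟩
        exact univ_subset_iff.1 (ih t htT hxt ▸ subset_sUnion_of_mem htT)
    refine ⟨univ, ?_, isOpen_univ, mem_univ x⟩
    refine subset_sInter fun U hU => (huniv U ?_ (hx U hU)).ge
    have hUo := hS U hU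
    rw [hB] at hUo
    exact hUo

/-- The lattice of open sets of an Alexandrov-discrete space is algebraic. -/
theorem TopologicalSpace.Opens.isCompactlyGenerated_of_alexandrovDiscrete {X : Type*}
    [TopologicalSpace X] [AlexandrovDiscrete X] : IsCompactlyGenerated (Opens X) := by
  refine ⟨fun U => ⟨{V | IsCompactElement V ∧ V ≤ U}, fun _ hV => hV.1,
    le_antisymm (sSup_le fun _ hV => hV.2) fun x hx => ?_⟩⟩
  let N : Opens X := ⟨nhdsKer {x}, isOpen_nhdsKer⟩
  have hN : IsCompactElement N :=
    (Opens.isCompactElement_iff N).2 (IsCompact.nhdsKer_iff.2 isCompact_singleton)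
  have hNU : N ≤ U := nhdsKer_minimal (Set.singleton_subset_iff.2 hx) U.isOpen
  have hle : N ≤ sSup {V | IsCompactElement V ∧ V ≤ U} := le_sSup ⟨hN, hNU⟩
  exact hle (subset_nhdsKer rfl)

theorem IsCompactElement.sup {L : Type*} [Lattice L] {c d : L} (hc : IsCompactElement c)
    (hd : IsCompactElement d) : IsCompactElement (c ⊔ d) := by
  intro s u hne hdir hu hle
  obtain ⟨x, hxs, hcx⟩ := hc s u hne hdir hu (le_sup_left.trans hle)
  obtain ⟨y, hys, hdy⟩ := hd s u hne hdir hu (le_sup_right.trans hle)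
  obtain ⟨z, hzs, hxz, hyz⟩ := hdir x hxs y hys
  exact ⟨z, hzs, sup_le (hcx.trans hxz) (hdy.trans hyz)⟩

theorem IsCompactElement.isOpen_Ici {L : Type*} [PartialOrder L] [TopologicalSpace L]
    [Topology.IsScott L Set.univ] {c : L} (hc : IsCompactElement c) : IsOpen (Set.Ici c) :=
  (Topology.IsScott.isOpen_iff_isUpperSet_and_dirSupInaccOn (D := Set.univ)).2
    ⟨isUpperSet_Ici c, fun s _ hne hdir u hu hcu => hc s u hne hdir hu hcu⟩

/-- The Scott topology of an algebraic complete lattice is quasi-sober. -/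
theorem quasiSober_of_isCompactlyGenerated {L : Type*} [CompleteLattice L]
    [IsCompactlyGenerated L] [TopologicalSpace L] [Topology.IsScott L Set.univ] :
    QuasiSober L := by
  refine ⟨fun {F} hF hFc => ⟨sSup F, ?_⟩⟩
  have hlow := Topology.IsScott.isLowerSet_of_isClosed hFc
  have hdsc := Topology.IsScott.dirSupClosed_of_isClosed hFc
  obtain ⟨a, ha⟩ := hF.nonempty
  have hdir : DirectedOn (· ≤ ·) {c | IsCompactElement c ∧ c ∈ F} := by
    rintro c ⟨hc, hcF⟩ d ⟨hd, hdF⟩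
    obtain ⟨z, hzF, hcz, hdz⟩ := hF.isPreirreducible _ _ hc.isOpen_Ici hd.isOpen_Ici
      ⟨c, hcF, le_rfl⟩ ⟨d, hdF, le_rfl⟩
    exact ⟨c ⊔ d, ⟨hc.sup hd, hlow (sup_le hcz hdz) hzF⟩, le_sup_left, le_sup_right⟩
  have hne : {c | IsCompactElement c ∧ c ∈ F}.Nonempty :=
    ⟨⊥, fun s _ hs _ _ _ => hs.imp fun _ hx => ⟨hx, bot_le⟩, hlow bot_le ha⟩
  have hlub : IsLUB {c | IsCompactElement c ∧ c ∈ F} (sSup F) := by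
    refine ⟨fun c hc => le_sSup hc.2, fun b hb => sSup_le fun x hx => ?_⟩
    exact le_iff_compact_le_imp.2 fun c hc hcx => hb ⟨hc, hlow hcx hx⟩
  have hmem : sSup F ∈ F := hdsc (fun _ hc => hc.2) hne hdir hlub
  rw [IsGenericPoint, Topology.IsScott.closure_singleton]
  exact Set.Subset.antisymm (fun x hx => hlow hx hmem) fun x hx => le_sSup hx

/-- Let X be an ω type P-space. Then the lattice 𝒪(X) of open subsets of X,
equipped with the Scott topology, is sober. -/
theorem stmt11 {X : Type*} [TopologicalSpace X]
    (h1 : OmegaTypeSpace X) (h2 : PSpace X) :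
    ScottSober (TopologicalSpace.Opens X) := by
  have := alexandrovDiscrete_of_omegaTypeSpace_of_pSpace h1 h2
  have := TopologicalSpace.Opens.isCompactlyGenerated_of_alexandrovDiscrete (X := X)
  let := Topology.scott (TopologicalSpace.Opens X) Set.univ
  have : Topology.IsScott (TopologicalSpace.Opens X) Set.univ := ⟨rfl⟩
  exact ⟨inferInstance, quasiSober_of_isCompactlyGenerated⟩
end

section
/- Let X be a countable P-space. Then the lattice 𝒪(X) of open subsets of X, equipped with the Scott topology, is sober. -/
/-- A countable P-space is Alexandrov-discrete: an arbitrary intersection of open sets agrees with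
a subintersection having one member for each point of the complement. -/
theorem PSpace.alexandrovDiscrete {X : Type*} [TopologicalSpace X] [Countable X] (h : PSpace X) :
    AlexandrovDiscrete X where
  isOpen_sInter S hS := by
    have key : ∀ y : ↥(⋂₀ S)ᶜ, ∃ U ∈ S, y.1 ∉ U := fun y ↦ by
      simpa only [Set.mem_compl_iff, Set.mem_sInter, not_forall, exists_prop] using y.2
    choose U hUS hU using key
    have hinter : ⋂₀ S = ⋂₀ Set.range U := by
      refine (Set.sInter_subset_sInter (Set.range_subset_iff.2 hUS)).antisymm fun x hx ↦ ?_
      by_contra hxS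
      exact hU ⟨x, hxS⟩ (hx _ ⟨⟨x, hxS⟩, rfl⟩)
    rw [hinter]
    exact h _ (Set.countable_range U) (Set.forall_mem_range.2 fun y ↦ hS _ (hUS y))

namespace TopologicalSpace.Opens

variable {X : Type*} [TopologicalSpace X] [TopologicalSpace (Opens X)]
  [Topology.IsScott (Opens X) Set.univ]

/-- The open neighbourhoods of a point form a Scott open set. -/
theorem isOpen_setOf_mem_of_isScott (x : X) : IsOpen {U : Opens X | x ∈ U} := by
  refine (Topology.IsScott.isOpen_iff_isUpperSet_and_dirSupInaccOn (D := Set.univ)).2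
    ⟨fun U V hUV hx ↦ hUV hx, fun d _ _ _ a ha hx ↦ ?_⟩
  obtain rfl := ha.sSup_eq
  obtain ⟨U, hU, hxU⟩ := mem_sSup.1 hx
  exact ⟨U, hU, hxU⟩

/-- A finite set of points covered by an irreducible family of open sets is covered by a single
member of the family. -/
theorem exists_mem_finset_subset_of_isIrreducible {F : Set (Opens X)} (hF : IsIrreducible F)
    (A : Finset X) (hA : (A : Set X) ⊆ (sSup F : Opens X)) : ∃ U ∈ F, (A : Set X) ⊆ U := by
  classical
  obtain ⟨U, hUF, hU⟩ := isIrreducible_iff_sInter.1 hF (A.image fun x ↦ {U : Opens X | x ∈ U})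
    (Finset.forall_mem_image.2 fun x _ ↦ isOpen_setOf_mem_of_isScott x)
    (Finset.forall_mem_image.2 fun x hx ↦ by
      obtain ⟨U, hUF, hxU⟩ := mem_sSup.1 (hA hx)
      exact ⟨U, hUF, hxU⟩)
  exact ⟨U, hUF, fun x hx ↦ hU _ (Finset.mem_coe.2 (Finset.mem_image_of_mem _ hx))⟩

/-- In an Alexandrov-discrete space, an irreducible Scott closed family of open sets contains
its union. -/
theorem sSup_mem_of_isIrreducible [AlexandrovDiscrete X] {F : Set (Opens X)}
    (hF : IsIrreducible F) (hF' : IsClosed F) : sSup F ∈ F := by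
  classical
  let K : {A : Finset X // (A : Set X) ⊆ (sSup F : Opens X)} → Opens X :=
    fun A ↦ ⟨nhdsKer (A.1 : Set X), isOpen_nhdsKer⟩
  have hK : Set.range K ⊆ F := by
    rintro _ ⟨A, rfl⟩
    obtain ⟨U, hUF, hU⟩ := exists_mem_finset_subset_of_isIrreducible hF A.1 A.2
    exact Topology.IsScott.isLowerSet_of_isClosed hF' (nhdsKer_minimal hU U.isOpen) hUF
  have hdir : Directed (· ≤ ·) K := fun A B ↦
    ⟨⟨A.1 ∪ B.1, by simpa using ⟨A.2, B.2⟩⟩, nhdsKer_mono (by simp), nhdsKer_mono (by simp)⟩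
  refine Topology.IsScott.dirSupClosed_of_isClosed hF' hK ⟨_, ⟨⟨∅, by simp⟩, rfl⟩⟩
    hdir.directedOn_range ⟨?_, fun V hV x hx ↦ ?_⟩
  · exact fun U hU ↦ le_sSup (hK hU)
  · exact hV ⟨⟨{x}, by simpa using hx⟩, rfl⟩ (subset_nhdsKer (by simp))

theorem quasiSober_of_isScott [AlexandrovDiscrete X] : QuasiSober (Opens X) where
  sober {F} hF hF' := ⟨sSup F, by
    rw [IsGenericPoint, Topology.IsScott.closure_singleton]
    exact Set.Subset.antisymm ((Topology.IsScott.isLowerSet_of_isClosed hF').Iic_subset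
      (sSup_mem_of_isIrreducible hF hF')) fun U hU ↦ le_sSup hU⟩

end TopologicalSpace.Opens

/-- Let X be a countable P-space. Then the lattice 𝒪(X) of open subsets of X,
equipped with the Scott topology, is sober. -/
theorem stmt12 {X : Type*} [TopologicalSpace X] [Countable X] (h : PSpace X) :
    ScottSober (TopologicalSpace.Opens X) := by
  have := h.alexandrovDiscrete
  let : TopologicalSpace (TopologicalSpace.Opens X) := Topology.scott _ Set.univ
  have : Topology.IsScott (TopologicalSpace.Opens X) Set.univ := ⟨rfl⟩
  exact ⟨inferInstance, TopologicalSpace.Opens.quasiSober_of_isScott⟩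
end
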